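/- Let A be a TS, let T be a spanning tree of A rooted at s0, and for every state s let ψ_s : E → 𝔽₂ assign to each event e the parity of the number of occurrences of e on the unique T-path from s0 to s. Suppose ρ : E → 𝔽₂ satisfies, for every chord s --e--> s' of A (a transition not in T), the equation ρ(e) + Σ_{e' ∈ E} (ψ_s(e') + ψ_{s'}(e'))·ρ(e') = 0 in 𝔽₂. Then the pair (sup, sig), where sup(s) = Σ_{e ∈ E} ψ_s(e)·ρ(e) (computed in 𝔽₂ and identified with {0,1}) and sig(e) = swap if ρ(e) = 1 and sig(e) = nop if ρ(e) = 0, is a {nop, swap}-region of A; in particular it is a τ-region for every type of nets τ with {nop, swap} ⊆ τ. -/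

import Mathlib

/-!
The support `σ s = ∑ e, ψ s e * ρ e` is a potential for `ρ`: every transition from `s` to `s'`
labelled `e` satisfies `σ s' = σ s + ρ e` in `ZMod 2`. For a tree transition,
appending it to the tree path to `s` gives a tree path to `s'`, so `ψ s'` is `ψ s` plus the indicator of `e`. For a chord this identity is a
rearrangement of the chord equation, since `-1 = 1` in `ZMod 2`. Adding `1` in `ZMod 2` is `iSwap`
and adding `0` is `iNop`, so the potential identity is the region condition.
-/

/-! Boolean interactions -/

abbrev Interaction := Bool → Option Bool

def iNop : Interaction := fun b => some b
def iInp : Interaction := fun b => if b then some false else none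
def iOut : Interaction := fun b => if b then none else some true
def iSet : Interaction := fun _ => some true
def iRes : Interaction := fun _ => some false
def iSwap : Interaction := fun b => some (!b)
def iUsed : Interaction := fun b => if b then some true else none
def iFree : Interaction := fun b => if b then none else some false

def allInteractions : Set Interaction :=
  {iNop, iInp, iOut, iSet, iRes, iSwap, iUsed, iFree}

/-! Transition systems and regions -/

structure TS (S E : Type) where
  delta : S → E → Option S
  init : S

def IsRegion {S E : Type} (A : TS S E) (τ : Set Interaction)
    (sup : S → Bool) (sig : E → Interaction) : Prop :=
  (∀ e, sig e ∈ τ) ∧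
  ∀ s e s', A.delta s e = some s' → sig e (sup s) = some (sup s')

def Separable {S E : Type} (A : TS S E) (τ : Set Interaction) (s s' : S) : Prop :=
  ∃ sup sig, IsRegion A τ sup sig ∧ sup s ≠ sup s'

def Inhibitable {S E : Type} (A : TS S E) (τ : Set Interaction) (e : E) (s : S) : Prop :=
  ∃ sup sig, IsRegion A τ sup sig ∧ sig e (sup s) = none

def SSP {S E : Type} (A : TS S E) (τ : Set Interaction) : Prop :=
  ∀ s s' : S, s ≠ s' → Separable A τ s s'

def ESSP {S E : Type} (A : TS S E) (τ : Set Interaction) : Prop :=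
  ∀ (s : S) (e : E), A.delta s e = none → Inhibitable A τ e s

def Feasible {S E : Type} (A : TS S E) (τ : Set Interaction) : Prop :=
  SSP A τ ∧ ESSP A τ

def Reachable {S E : Type} (A : TS S E) : Prop :=
  ∀ s : S, Relation.ReflTransGen (fun x y => ∃ e, A.delta x e = some y) A.init s

/-! Spanning trees and path parities.  A transition is a triple (s, e, s') with
δ(s, e) = s'.  `IsPathFrom T s l t` states that `l` is a directed path from `s`
to `t` consisting of transitions from `T`. -/

def IsPathFrom {S E : Type} (T : Set (S × E × S)) : S → List (S × E × S) → S → Prop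
  | s, [], t => s = t
  | s, a :: l, t => a.1 = s ∧ a ∈ T ∧ IsPathFrom T a.2.2 l t

theorem IsPathFrom.snoc {S E : Type} {T : Set (S × E × S)} {t t' : S} {e : E}
    (h : (t, e, t') ∈ T) : ∀ {l : List (S × E × S)} {s : S},
      IsPathFrom T s l t → IsPathFrom T s (l ++ [(t, e, t')]) t'
  | [], _, hl => ⟨Eq.symm hl, h, rfl⟩
  | _ :: _, _, hl => ⟨hl.1, hl.2.1, IsPathFrom.snoc h hl.2.2⟩

/-- a solution ρ of all chord equations yields a {nop, swap}-region
(and hence a τ-region for every τ ⊇ {nop, swap}), where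
sup(s) = Σ_{e} ψ_s(e)·ρ(e) and sig(e) = swap iff ρ(e) = 1. -/
theorem region_from_chord_solution {S E : Type} [Fintype S] [Fintype E] [DecidableEq E]
    (A : TS S E) (hreach : Reachable A)
    (T : Set (S × E × S))
    (hT : ∀ a ∈ T, A.delta a.1 a.2.1 = some a.2.2)
    (htree : ∀ s : S, ∃! l : List (S × E × S), IsPathFrom T A.init l s)
    (ψ : S → E → ZMod 2)
    (hψ : ∀ (s : S) (l : List (S × E × S)), IsPathFrom T A.init l s →
      ∀ e : E, ψ s e = (l.countP (fun a => decide (a.2.1 = e)) : ZMod 2))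
    (ρ : E → ZMod 2)
    (hchord : ∀ (s : S) (e : E) (s' : S), A.delta s e = some s' → (s, e, s') ∉ T →
      ρ e + ∑ e' : E, (ψ s e' + ψ s' e') * ρ e' = 0) :
    IsRegion A {iNop, iSwap}
      (fun s => decide ((∑ e : E, ψ s e * ρ e) = 1))
      (fun e => if ρ e = 1 then iSwap else iNop) ∧
    ∀ τ : Set Interaction, iNop ∈ τ → iSwap ∈ τ →
      IsRegion A τ
        (fun s => decide ((∑ e : E, ψ s e * ρ e) = 1))
        (fun e => if ρ e = 1 then iSwap else iNop) := by
  have key : ∀ s e s', A.delta s e = some s' →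
      ∑ e' : E, ψ s' e' * ρ e' = ∑ e' : E, ψ s e' * ρ e' + ρ e := by
    intro s e s' h
    by_cases hmem : (s, e, s') ∈ T
    · obtain ⟨l, hl, -⟩ := htree s
      have hstep : ∀ e', ψ s' e' = ψ s e' + if e = e' then 1 else 0 := by
        intro e'
        rw [hψ s' _ (hl.snoc hmem) e', hψ s l hl e', List.countP_append]
        by_cases he : e = e' <;> simp [he]
      simp [hstep, add_mul, Finset.sum_add_distrib]
    · have hc := hchord s e s' h hmem
      simp only [add_mul, Finset.sum_add_distrib] at hc
      generalize ∑ e' : E, ψ s e' * ρ e' = x at *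
      generalize ∑ e' : E, ψ s' e' * ρ e' = y at *
      generalize ρ e = r at *
      clear * - hc
      revert x y r
      decide
  have hregion : ∀ τ : Set Interaction, iNop ∈ τ → iSwap ∈ τ →
      IsRegion A τ
        (fun s => decide ((∑ e : E, ψ s e * ρ e) = 1))
        (fun e => if ρ e = 1 then iSwap else iNop) := by
    intro τ hn hs
    refine ⟨fun e => by dsimp only; split_ifs <;> assumption, fun s e s' h => ?_⟩
    have hk := key s e s' h
    dsimp only
    rw [hk]
    generalize ∑ e' : E, ψ s e' * ρ e' = x
    generalize ρ e = r
    clear * -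
    revert x r
    -- The goal is rephrased on Booleans, where it is a check of four cases.
    have hdec : ∀ x r : ZMod 2, (if r = 1 then some (!decide (x = 1)) else some (decide (x = 1)))
        = some (decide (x + r = 1)) := by decide
    intro x r
    rw [← hdec]
    split_ifs <;> rfl
  exact ⟨hregion _ (by simp) (by simp), hregion⟩
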